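/- arXiv:1603.03292 — 8 statements merged into one kernel-verified Lean document; each statement's English description precedes it below -/
import Mathlib

section
/- Suppose adm satisfies: for all subgroups K ≤ H and J ≤ H of G, if adm(J, H) holds then adm(K ∩ J, K) holds. Then P_adm is stable under base change: for any morphisms f : S → T in P_adm and g : V → T of finite G-sets, the projection S ×_T V → V from the fiber product (with componentwise G-action) lies in P_adm. -/
/-! A point `(s, v)` of the fiber product has stabilizer `Stab v ⊓ Stab s`, and equivariance puts
both `Stab v` and `Stab s` inside `Stab (g v) = Stab (f s)`. Restricting
`adm (Stab s) (Stab (f s))` along `Stab v ≤ Stab (f s)` is therefore exactly the claim. -/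

open MulAction

/-- A map of `G`-sets is a morphism when it is equivariant. -/
def Equivariant (G : Type) [Group G] {S T : Type} [MulAction G S] [MulAction G T]
    (f : S → T) : Prop :=
  ∀ (g : G) (s : S), f (g • s) = g • f s

/-- `P_adm`: a morphism `f : S → T` of `G`-sets lies in `P_adm` iff
`adm (Stab s) (Stab (f s))` holds for every `s ∈ S`. -/
def Padm (G : Type) [Group G] (adm : Subgroup G → Subgroup G → Prop)
    {S T : Type} [MulAction G S] [MulAction G T] (f : S → T) : Prop :=
  ∀ s : S, adm (stabilizer G s) (stabilizer G (f s))

/-- if `adm` satisfies: for all subgroups `K ≤ H` and `J ≤ H` of `G`, if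
`adm(J, H)` holds then `adm(K ∩ J, K)` holds, then `P_adm` is stable under base change:
for `f : S → T` in `P_adm` and any `g : V → T`, the projection `S ×_T V → V` from the
fiber product (realized as the `G`-invariant subset of `S × V` consisting of the pairs
`(s, v)` with `f s = g v`, with the componentwise `G`-action) lies in `P_adm`; that is,
for every point `a` of the fiber product, `adm (Stab a) (Stab (a.2))` holds. -/
theorem stmt4 (G : Type) [Group G] [Finite G]
    (adm : Subgroup G → Subgroup G → Prop)
    (hstab : ∀ K J H : Subgroup G, K ≤ H → J ≤ H → adm J H → adm (K ⊓ J) K)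
    (S T V : Type) [Finite S] [Finite T] [Finite V]
    [MulAction G S] [MulAction G T] [MulAction G V]
    (f : S → T) (g : V → T) (hf : Equivariant G f) (hg : Equivariant G g)
    (hfP : Padm G adm f) :
    ∀ (A : SubMulAction G (S × V)), (A : Set (S × V)) = {p | f p.1 = g p.2} →
      ∀ a : A, adm (stabilizer G a) (stabilizer G (a : S × V).2) := by
  rintro A hA ⟨⟨s, v⟩, hmem⟩
  have hsv : f s = g v := by
    have h : (s, v) ∈ (A : Set (S × V)) := hmem
    rwa [hA] at h
  have hstabA : stabilizer G (⟨(s, v), hmem⟩ : A) = stabilizer G v ⊓ stabilizer G s := by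
    ext x
    simp only [Subgroup.mem_inf, mem_stabilizer_iff, Subtype.ext_iff, SubMulAction.val_smul,
      Prod.smul_mk, Prod.mk.injEq]
    exact and_comm
  rw [hstabA]
  refine hstab _ _ (stabilizer G (f s)) (fun x hx => ?_) (fun x hx => ?_) (hfP s)
  · rw [mem_stabilizer_iff] at hx ⊢
    rw [hsv, ← hg, hx]
  · rw [mem_stabilizer_iff] at hx ⊢
    rw [← hf, hx]
end

section
/- Suppose adm is conjugation invariant: for every g ∈ G and subgroups K ≤ H of G, adm(K, H) implies adm(gKg⁻¹, gHg⁻¹). Let H ≤ G be a subgroup and let f : S → T be an H-equivariant map of finite H-sets. Then adm(Stab_H(s), Stab_H(f(s))) holds for every s ∈ S (stabilizers taken in H, regarded as subgroups of G) if and only if the induced G-equivariant map G ×_H f : G ×_H S → G ×_H T lies in P_adm. -/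
/-!
The relation defining `G ×_H S` is already an equivalence relation, so `x` fixes `[g, s]` exactly
when `x g = g h` for some `h ∈ H` fixing `s`. Hence `Stab [g, s] = g Stab_H(s) g⁻¹`
(`stabilizer_mk`), and likewise `Stab [g, f s] = g Stab_H(f s) g⁻¹`. The condition defining `P_adm`
at `[g, s]` is therefore the conjugate by `g` of the condition on `Stab_H(s) ≤ Stab_H(f s)`:
conjugation invariance gives one implication, and `g = 1` gives the other.
-/

open MulAction

variable {G : Type} [Group G]

/-- The relation `(g * h, s) ∼ (g, h • s)` (for `h ∈ H`) generating the induced set. -/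
def indRel (H : Subgroup G) (S : Type) [MulAction H S] : G × S → G × S → Prop :=
  fun p q => ∃ h : H, p.1 = q.1 * (h : G) ∧ q.2 = h • p.2

/-- The induced `G`-set `G ×_H S` of a finite `H`-set `S`: the quotient of `G × S` by
the relation `(g h, s) ∼ (g, h • s)` for `h ∈ H`. -/
def Induced (H : Subgroup G) (S : Type) [MulAction H S] : Type :=
  Quot (indRel H S)

/-- The class `[g, s]` of `(g, s)` in `G ×_H S`. -/
def Induced.mk (H : Subgroup G) {S : Type} [MulAction H S] (g : G) (s : S) :
    Induced H S :=
  Quot.mk _ (g, s)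

/-- `G` acts on `G ×_H S` by left multiplication on the first coordinate. -/
instance Induced.instSMul (H : Subgroup G) (S : Type) [MulAction H S] :
    SMul G (Induced H S) where
  smul g := Quot.map (fun p => (g * p.1, p.2)) (by
    rintro ⟨g1, s1⟩ ⟨g2, s2⟩ ⟨h, h1, h2⟩
    dsimp only at h1 h2 ⊢
    exact ⟨h, by rw [h1, mul_assoc], h2⟩)

instance Induced.instMulAction (H : Subgroup G) (S : Type) [MulAction H S] :
    MulAction G (Induced H S) where
  one_smul x := by
    induction x using Quot.ind with
    | _ p =>
      show Quot.mk _ (1 * p.1, p.2) = Quot.mk _ (p.1, p.2)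
      rw [one_mul]
  mul_smul a b x := by
    induction x using Quot.ind with
    | _ p =>
      show Quot.mk _ (a * b * p.1, p.2) = Quot.mk _ (a * (b * p.1), p.2)
      rw [mul_assoc]

instance Induced.instFinite (H : Subgroup G) (S : Type) [Finite G] [Finite S]
    [MulAction H S] : Finite (Induced H S) :=
  Quot.finite _

/-- The `G`-equivariant map `G ×_H f : G ×_H S → G ×_H T` induced by an `H`-equivariant
map `f : S → T`, sending `[g, s]` to `[g, f s]`. -/
def indMap (H : Subgroup G) {S T : Type} [MulAction H S] [MulAction H T]
    (f : S → T) (hf : ∀ (h : H) (s : S), f (h • s) = h • f s) :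
    Induced H S → Induced H T :=
  Quot.map (fun p => (p.1, f p.2)) (by
    rintro ⟨g1, s1⟩ ⟨g2, s2⟩ ⟨h, h1, h2⟩
    dsimp only at h1 h2 ⊢
    exact ⟨h, h1, by rw [h2, hf]⟩)

/-- No equivalence closure is needed in the quotient defining `G ×_H S`. -/
theorem indRel_equivalence (H : Subgroup G) (S : Type) [MulAction H S] :
    Equivalence (indRel H S) where
  refl p := ⟨1, by simp, by simp⟩
  symm := by
    rintro ⟨g, s⟩ ⟨g', t⟩ ⟨h, h1, h2⟩
    dsimp only at h1 h2
    exact ⟨h⁻¹, by simp [h1], by simp [h2]⟩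
  trans := by
    rintro ⟨g, s⟩ ⟨g', t⟩ ⟨g'', u⟩ ⟨h, h1, h2⟩ ⟨k, k1, k2⟩
    dsimp only at h1 h2 k1 k2
    exact ⟨k * h, by simp [h1, k1, mul_assoc], by simp [h2, k2, mul_smul]⟩

/-- The stabilizer of `[g, s]` is `g Stab_H(s) g⁻¹`. -/
theorem stabilizer_mk (H : Subgroup G) {S : Type} [MulAction H S] (g : G) (s : S) :
    stabilizer G (Induced.mk H g s) =
      ((stabilizer H s).map H.subtype).map (MulAut.conj g).toMonoidHom := by
  ext x
  have key : x • Induced.mk H g s = Induced.mk H g s ↔ indRel H S (x * g, s) (g, s) :=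
    (indRel_equivalence H S).quot_mk_eq_iff (x * g, s) (g, s)
  rw [mem_stabilizer_iff, key]
  constructor
  · rintro ⟨h, h1, h2⟩
    dsimp only at h1 h2
    refine ⟨h, ⟨h, h2.symm, rfl⟩, ?_⟩
    simp [← h1]
  · rintro ⟨_, ⟨h, hs, rfl⟩, rfl⟩
    exact ⟨h, by simp, Eq.symm hs⟩

/-- suppose `adm` is conjugation invariant.  Let `H ≤ G` and let
`f : S → T` be an `H`-equivariant map of finite `H`-sets.  Then
`adm (Stab_H s) (Stab_H (f s))` holds for every `s ∈ S` (stabilizers taken in `H`,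
regarded as subgroups of `G`) if and only if the induced `G`-equivariant map
`G ×_H f : G ×_H S → G ×_H T` lies in `P_adm`. -/
theorem stmt5 (G : Type) [Group G] [Finite G]
    (adm : Subgroup G → Subgroup G → Prop)
    (hconj : ∀ (g : G) (K H : Subgroup G), K ≤ H → adm K H →
      adm (K.map (MulAut.conj g).toMonoidHom) (H.map (MulAut.conj g).toMonoidHom))
    (H : Subgroup G) (S T : Type) [Finite S] [Finite T]
    [MulAction H S] [MulAction H T]
    (f : S → T) (hf : ∀ (h : H) (s : S), f (h • s) = h • f s) :
    (∀ s : S, adm ((stabilizer H s).map H.subtype) ((stabilizer H (f s)).map H.subtype))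
      ↔ Padm G adm (indMap H f hf) := by
  have hmk : ∀ (g : G) (s : S), indMap H f hf (Induced.mk H g s) = Induced.mk H g (f s) :=
    fun _ _ => rfl
  constructor
  · intro h x
    obtain ⟨⟨g, s⟩, rfl⟩ := Quot.exists_rep x
    change adm (stabilizer G (Induced.mk H g s)) (stabilizer G (indMap H f hf (Induced.mk H g s)))
    rw [hmk, stabilizer_mk, stabilizer_mk]
    refine hconj g _ _ (Subgroup.map_mono fun k hk => ?_) (h s)
    rw [mem_stabilizer_iff] at hk ⊢
    rw [← hf, hk]
  · intro h s
    have h1 := h (Induced.mk H 1 s)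
    have conj_one : ∀ K : Subgroup G, K.map (MulAut.conj (1 : G)).toMonoidHom = K := by
      intro K
      ext x
      simp
    rwa [hmk, stabilizer_mk, stabilizer_mk, conj_one, conj_one] at h1
end

section
/- Let H ≤ G be a subgroup, S a finite H-set, and f′ : T′ → G ×_H S any G-equivariant map of finite G-sets. Then there exist a finite H-set T, an H-equivariant map f : T → S, and a G-equivariant isomorphism φ : T′ → G ×_H T such that (G ×_H f) ∘ φ = f′. -/
/-!
The set `T` is the fibre of `f'` over `{[1, s] | s : S}`, that is, the pullback of `f'` along
`S → G ×_H S`, `s ↦ [1, s]`; it consists of pairs `(t, s)` with `f' t = [1, s]`, `H` acts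
diagonally, and `f` is the projection to `S`. The equivariant map `G ×_H T → T'`,
`[g, (t, s)] ↦ g • t`, is the inverse of `φ`. It is surjective because `f' x = [g, s]` gives
`f' (g⁻¹ • x) = [1, s]`. It is injective because `g • t = g' • t'` forces `[g, s] = [g', s']`,
and the relation generating `G ×_H S` is already an equivalence (`Induced.mk_eq_mk_iff`), so the
`h : H` relating `(g, s)` to `(g', s')` also relates `t` to `t'`.
-/

open MulAction

variable {G : Type} [Group G]

/-- A bundled finite `H`-set. -/
structure FinHSet (H : Type) [Group H] : Type 1 where
  carrier : Type
  [fin : Finite carrier]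
  [act : MulAction H carrier]

attribute [instance] FinHSet.fin FinHSet.act

theorem Induced.smul_mk (H : Subgroup G) {S : Type} [MulAction H S] (a g : G) (s : S) :
    a • Induced.mk H g s = Induced.mk H (a * g) s := rfl

theorem Induced.mk_eq_mk_iff (H : Subgroup G) {S : Type} [MulAction H S] (g g' : G) (s s' : S) :
    Induced.mk H g s = Induced.mk H g' s' ↔ ∃ h : H, g = g' * (h : G) ∧ s' = h • s :=
  (indRel_equivalence H S).quot_mk_eq_iff (g, s) (g', s')

theorem Induced.mk_mul (H : Subgroup G) {S : Type} [MulAction H S] (g : G) (h : H) (s : S) :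
    Induced.mk H (g * (h : G)) s = Induced.mk H g (h • s) :=
  (Induced.mk_eq_mk_iff H _ _ _ _).2 ⟨h, rfl, rfl⟩

/-- The pullback of `f' : T' → G ×_H S` along `s ↦ [1, s]`, encoded as pairs `(t, s)` with
`f' t = [1, s]`. -/
def BaseFibre (H : Subgroup G) {S T' : Type} [MulAction H S] (f' : T' → Induced H S) : Type :=
  {p : T' × S // f' p.1 = Induced.mk H 1 p.2}

/-- The diagonal action of `H` on the pullback. -/
@[reducible]
def BaseFibre.mulAction (H : Subgroup G) {S T' : Type} [MulAction H S] [MulAction G T']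
    {f' : T' → Induced H S} (hf' : Equivariant G f') : MulAction H (BaseFibre H f') where
  smul h p := ⟨((h : G) • p.1.1, h • p.1.2), by
    rw [hf', p.2, Induced.smul_mk, ← Induced.mk_mul, mul_one, one_mul]⟩
  one_smul p := Subtype.ext (Prod.ext (one_smul G p.1.1) (one_smul H p.1.2))
  mul_smul a b p := Subtype.ext (Prod.ext (mul_smul (a : G) (b : G) p.1.1) (mul_smul a b p.1.2))

/-- let `H ≤ G` be a subgroup, `S` a finite `H`-set, and
`f′ : T′ → G ×_H S` any `G`-equivariant map of finite `G`-sets.  Then there exist a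
finite `H`-set `T`, an `H`-equivariant map `f : T → S`, and a `G`-equivariant
isomorphism `φ : T′ → G ×_H T` such that `(G ×_H f) ∘ φ = f′`. -/
theorem stmt6 (G : Type) [Group G] [Finite G] (H : Subgroup G)
    (S : Type) [Finite S] [MulAction H S]
    (T' : Type) [Finite T'] [MulAction G T']
    (f' : T' → Induced H S) (hf' : Equivariant G f') :
    ∃ (T : FinHSet H) (f : T.carrier → S)
      (hf : ∀ (h : H) (t : T.carrier), f (h • t) = h • f t)
      (φ : T' ≃ Induced H T.carrier),
      Equivariant G (φ : T' → Induced H T.carrier) ∧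
      ∀ x : T', indMap H f hf (φ x) = f' x := by
  let _ : MulAction H (BaseFibre H f') := BaseFibre.mulAction H hf'
  have : Finite (BaseFibre H f') := Subtype.finite
  let ψ : Induced H (BaseFibre H f') → T' := Quot.lift (fun p => p.1 • p.2.1.1) (by
    rintro ⟨g, p⟩ ⟨g', p'⟩ ⟨h, h1, h2⟩
    dsimp only at h1 h2 ⊢
    subst h1 h2
    exact mul_smul g' (h : G) p.1.1)
  have hval (g : G) (p : BaseFibre H f') : f' (g • p.1.1) = Induced.mk H g p.1.2 := by
    rw [hf', p.2, Induced.smul_mk, mul_one]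
  have hψ : Function.Bijective ψ := by
    constructor
    · rintro ⟨g, p⟩ ⟨g', p'⟩ (e : g • p.1.1 = g' • p'.1.1)
      have e' := congrArg f' e
      rw [hval, hval, Induced.mk_eq_mk_iff] at e'
      obtain ⟨h, h1, h2⟩ := e'
      refine Quot.sound ⟨h, h1, Subtype.ext (Prod.ext ?_ h2)⟩
      rw [h1, mul_smul] at e
      exact (smul_left_cancel g' e).symm
    · intro x
      obtain ⟨⟨g, s⟩, hx⟩ := Quot.exists_rep (f' x)
      change Induced.mk H g s = f' x at hx
      exact ⟨Induced.mk H g ⟨(g⁻¹ • x, s), by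
        rw [hf', ← hx, Induced.smul_mk, inv_mul_cancel]⟩, smul_inv_smul g x⟩
  have hψG : Equivariant G ψ := by
    rintro a ⟨g, p⟩
    exact mul_smul a g p.1.1
  let e := Equiv.ofBijective ψ hψ
  refine ⟨⟨BaseFibre H f'⟩, fun p => p.1.2, fun _ _ => rfl, e.symm, fun a x => ?_, fun x => ?_⟩
  · rw [Equiv.symm_apply_eq]
    exact ((hψG a (e.symm x)).trans (congrArg (a • ·) (e.apply_symm_apply x))).symm
  · obtain ⟨y, rfl⟩ := e.surjective x
    rw [Equiv.symm_apply_apply]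
    obtain ⟨g, p⟩ := y
    exact (hval g p).symm
end

section
/- Let P be a class of morphisms of finite G-sets that is closed under composition, stable under base change, closed under disjoint unions of morphisms (if f and g belong to P then so does f ⊔ g), and contains the identity of the one-point G-set ∗ and the unique map ∅ → ∗. Then P contains every injective morphism of finite G-sets. -/
/-! The map `id ⊔ (∅ → ∗) : ∗ ⊔ ∅ → ∗ ⊔ ∗` belongs to `P`, and it is a subobject classifier for
finite `G`-sets: an injective equivariant `f : S → T` is its base change along the characteristic map
`T → ∗ ⊔ ∗` of the range of `f`. That map is equivariant because the range of `f` and its complement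
are both `G`-stable. -/

open MulAction

/-- The componentwise action of `G` on a disjoint union of `G`-sets. -/
instance sumSMul {G S T : Type} [SMul G S] [SMul G T] : SMul G (S ⊕ T) :=
  ⟨fun g x => x.map (fun s => g • s) (fun t => g • t)⟩

instance sumMulAction {G S T : Type} [Monoid G] [MulAction G S] [MulAction G T] :
    MulAction G (S ⊕ T) where
  one_smul x := by
    cases x with
    | inl s => show Sum.inl ((1 : G) • s) = _; rw [one_smul]
    | inr t => show Sum.inr ((1 : G) • t) = _; rw [one_smul]
  mul_smul a b x := by
    cases x with
    | inl s => show Sum.inl ((a * b) • s) = Sum.inl (a • b • s); rw [mul_smul]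
    | inr t => show Sum.inr ((a * b) • t) = Sum.inr (a • b • t); rw [mul_smul]

/-- A class of morphisms of finite `G`-sets. -/
abbrev MorCls (G : Type) [Group G] : Type 1 :=
  ∀ (S T : Type) [Finite S] [Finite T] [MulAction G S] [MulAction G T], (S → T) → Prop

/-- `P` is stable under base change: for every pullback square of finite `G`-sets
(expressed elementwise: `p₁, p₂` are the projections of a limit cone over
`f : S → T ← V : g`) whose right leg `f` belongs to `P`, the parallel left leg `p₂`
belongs to `P`. -/
def StableUnderBC (G : Type) [Group G] (P : MorCls G) : Prop :=
  ∀ (A S V T : Type) [Finite A] [Finite S] [Finite V] [Finite T]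
    [MulAction G A] [MulAction G S] [MulAction G V] [MulAction G T]
    (p₁ : A → S) (p₂ : A → V) (f : S → T) (g : V → T),
    Equivariant G p₁ → Equivariant G p₂ → Equivariant G f → Equivariant G g →
    (∀ a : A, f (p₁ a) = g (p₂ a)) →
    (∀ (s : S) (v : V), f s = g v → ∃! a : A, p₁ a = s ∧ p₂ a = v) →
    P S T f → P A V p₂

/-- The trivial action of `G` on the empty `G`-set. -/
instance emptyMulAction {G : Type} [Monoid G] : MulAction G Empty where
  smul _ x := x.elim
  one_smul x := x.elim
  mul_smul _ _ x := x.elim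

/-- The range of an equivariant map and its complement are both `G`-stable. -/
theorem Equivariant.smul_mem_range_iff {G S T : Type} [Group G] [MulAction G S] [MulAction G T]
    {f : S → T} (hf : Equivariant G f) (g : G) (t : T) :
    g • t ∈ Set.range f ↔ t ∈ Set.range f := by
  constructor
  · rintro ⟨s, hs⟩
    exact ⟨g⁻¹ • s, by rw [hf, hs, inv_smul_smul]⟩
  · rintro ⟨s, rfl⟩
    exact ⟨g • s, hf g s⟩

/-- let `P` be a class of morphisms of finite `G`-sets that is closed under
composition, stable under base change, closed under disjoint unions of morphisms, and
contains the identity of the one-point `G`-set `∗` and the unique map `∅ → ∗`.  Then `P`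
contains every injective morphism of finite `G`-sets. -/
theorem stmt7 (G : Type) [Group G] [Finite G] (P : MorCls G)
    (hcomp : ∀ (S T U : Type) [Finite S] [Finite T] [Finite U]
      [MulAction G S] [MulAction G T] [MulAction G U] (f : S → T) (g : T → U),
      Equivariant G f → Equivariant G g → P S T f → P T U g → P S U (g ∘ f))
    (hstable : StableUnderBC G P)
    (hsum : ∀ (S T S' T' : Type) [Finite S] [Finite T] [Finite S'] [Finite T']
      [MulAction G S] [MulAction G T] [MulAction G S'] [MulAction G T']
      (f : S → T) (g : S' → T'), Equivariant G f → Equivariant G g →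
      P S T f → P S' T' g → P (S ⊕ S') (T ⊕ T') (Sum.map f g))
    (hid : P PUnit PUnit id)
    (hempty : P Empty PUnit (fun _ => PUnit.unit)) :
    ∀ (S T : Type) [Finite S] [Finite T] [MulAction G S] [MulAction G T] (f : S → T),
      Equivariant G f → Function.Injective f → P S T f := by
  classical
  intro S T _ _ _ _ f hf hinj
  have hmono : P (PUnit ⊕ Empty) (PUnit ⊕ PUnit) (Sum.map id (fun _ => PUnit.unit)) :=
    hsum _ _ _ _ _ _ (fun _ _ => rfl) (fun _ _ => rfl) hid hempty
  refine hstable S (PUnit ⊕ Empty) T (PUnit ⊕ PUnit) (fun _ => Sum.inl PUnit.unit) f _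
    (fun t => if t ∈ Set.range f then Sum.inl PUnit.unit else Sum.inr PUnit.unit)
    (fun _ _ => rfl) hf ?_ ?_ ?_ ?_ hmono
  · rintro g (x | x)
    · rfl
    · exact x.elim
  · intro g t
    simp only [hf.smul_mem_range_iff]
    split_ifs <;> rfl
  · intro a
    simp
  · rintro (x | x) v h
    · by_cases hv : v ∈ Set.range f
      · obtain ⟨a, rfl⟩ := hv
        exact ⟨a, ⟨rfl, rfl⟩, fun b hb => hinj hb.2⟩
      · simp only [if_neg hv] at h
        cases h
    · exact x.elim
end

section
/- Let P be a class of morphisms of finite G-sets that is closed under composition, stable under base change, and contains the identity of the one-point G-set ∗. Then the following are equivalent: (1) P contains all identity morphisms, all summand inclusions S → S ⊔ S′, and all copairings [f, g] : S ⊔ S′ → U for f : S → U and g : S′ → U in P; (2) P is closed under disjoint unions of morphisms (if f and g belong to P then so does f ⊔ g) and contains the unique map ∅ → ∗ and the fold map ∗ ⊔ ∗ → ∗. -/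
/-!
Both directions combine the universal property of `⊔` with base change from a map whose domain and
codomain are built out of `∅` and `∗`.

* From (1) to (2): `f ⊔ g = [inl ∘ f, inr ∘ g]`, the fold map is `[id, id]`, and `∅ → ∗` is the
  pullback of the summand inclusion `∅ → ∅ ⊔ ∗` along `∗ → ∅ ⊔ ∗`.
* From (2) to (1): the identity of `S` is the pullback of `id : ∗ → ∗` along `S → ∗`; the inclusion
  `S → S ⊔ S'` is the pullback of `id ⊔ ! : ∗ ⊔ ∅ → ∗ ⊔ ∗` along `S ⊔ S' → ∗ ⊔ ∗`; the fold map
  `U ⊔ U → U` is the pullback of `∗ ⊔ ∗ → ∗` along `U → ∗`, and `[f, g]` is the composite of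
  `f ⊔ g` with the fold map of `U`.
-/

open MulAction

section Equivariance

variable {G : Type} [Group G] {S T S' T' U : Type} [MulAction G S] [MulAction G T]
  [MulAction G S'] [MulAction G T'] [MulAction G U]

theorem equivariant_id : Equivariant G (id : S → S) := fun _ _ => rfl

theorem equivariant_inl : Equivariant G (Sum.inl : S → S ⊕ S') := fun _ _ => rfl

theorem equivariant_inr : Equivariant G (Sum.inr : S' → S ⊕ S') := fun _ _ => rfl

theorem equivariant_toPUnit : Equivariant G (fun _ : S => PUnit.unit.{1}) := fun _ _ => rfl

theorem Equivariant.comp {f : S → T} {g : T → U} (hf : Equivariant G f) (hg : Equivariant G g) :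
    Equivariant G (g ∘ f) := fun a s => by
  simp only [Function.comp_apply, hf a s, hg a (f s)]

theorem Equivariant.sumElim {f : S → U} {g : S' → U} (hf : Equivariant G f)
    (hg : Equivariant G g) : Equivariant G (Sum.elim f g) := by
  rintro a (s | s)
  exacts [hf a s, hg a s]

theorem Equivariant.sumMap {f : S → T} {g : S' → T'} (hf : Equivariant G f)
    (hg : Equivariant G g) : Equivariant G (Sum.map f g) := by
  rintro a (s | s)
  exacts [congrArg Sum.inl (hf a s), congrArg Sum.inr (hg a s)]

theorem equivariant_fromEmpty (f : Empty → S) : Equivariant G f := fun _ s => s.elim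

end Equivariance

/-- let `P` be a class of morphisms of finite `G`-sets that is closed under
composition, stable under base change, and contains the identity of the one-point
`G`-set `∗`.  Then the following are equivalent:
(1) `P` contains all identity morphisms, all summand inclusions `S → S ⊔ S′`, and all
copairings `[f, g] : S ⊔ S′ → U` for `f : S → U` and `g : S′ → U` in `P`;
(2) `P` is closed under disjoint unions of morphisms and contains the unique map
`∅ → ∗` and the fold map `∗ ⊔ ∗ → ∗`. -/
theorem stmt8 (G : Type) [Group G] [Finite G] (P : MorCls G)
    (hcomp : ∀ (S T U : Type) [Finite S] [Finite T] [Finite U]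
      [MulAction G S] [MulAction G T] [MulAction G U] (f : S → T) (g : T → U),
      Equivariant G f → Equivariant G g → P S T f → P T U g → P S U (g ∘ f))
    (hstable : StableUnderBC G P)
    (hpt : P PUnit PUnit id) :
    ((∀ (S : Type) [Finite S] [MulAction G S], P S S id) ∧
     (∀ (S S' : Type) [Finite S] [Finite S'] [MulAction G S] [MulAction G S'],
        P S (S ⊕ S') Sum.inl ∧ P S' (S ⊕ S') Sum.inr) ∧
     (∀ (S S' U : Type) [Finite S] [Finite S'] [Finite U]
        [MulAction G S] [MulAction G S'] [MulAction G U]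
        (f : S → U) (g : S' → U), Equivariant G f → Equivariant G g →
        P S U f → P S' U g → P (S ⊕ S') U (Sum.elim f g)))
    ↔
    ((∀ (S T S' T' : Type) [Finite S] [Finite T] [Finite S'] [Finite T']
        [MulAction G S] [MulAction G T] [MulAction G S'] [MulAction G T']
        (f : S → T) (g : S' → T'), Equivariant G f → Equivariant G g →
        P S T f → P S' T' g → P (S ⊕ S') (T ⊕ T') (Sum.map f g)) ∧
     P Empty PUnit (fun _ => PUnit.unit) ∧
     P (PUnit ⊕ PUnit) PUnit (Sum.elim id id)) := by
  constructor
  · rintro ⟨hid, hinc, hcop⟩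
    refine ⟨?_, ?_, ?_⟩
    · intro S T S' T' _ _ _ _ _ _ _ _ f g hf hg Pf Pg
      exact hcop S S' (T ⊕ T') (Sum.inl ∘ f) (Sum.inr ∘ g)
        (hf.comp equivariant_inl) (hg.comp equivariant_inr)
        (hcomp S T (T ⊕ T') f Sum.inl hf equivariant_inl Pf (hinc T T').1)
        (hcomp S' T' (T ⊕ T') g Sum.inr hg equivariant_inr Pg (hinc T T').2)
    · refine hstable Empty Empty PUnit (Empty ⊕ PUnit) id (fun _ => PUnit.unit) Sum.inl Sum.inr
        equivariant_id (equivariant_fromEmpty _) equivariant_inl equivariant_inr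
        (fun a => a.elim) (fun s => s.elim) (hinc Empty PUnit).1
    · exact hcop PUnit PUnit PUnit id id equivariant_id equivariant_id hpt hpt
  · rintro ⟨hsum, hempty, hfold⟩
    refine ⟨?_, ?_, ?_⟩
    · intro S _ _
      refine hstable S PUnit S PUnit (fun _ => PUnit.unit) id id (fun _ => PUnit.unit)
        equivariant_toPUnit equivariant_id equivariant_id equivariant_toPUnit
        (fun _ => rfl) ?_ hpt
      intro _ v _
      exact ⟨v, ⟨rfl, rfl⟩, fun _ h => h.2⟩
    · intro S S' _ _ _ _
      constructor
      · refine hstable S (PUnit ⊕ Empty) (S ⊕ S') (PUnit ⊕ PUnit)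
          (fun _ => Sum.inl PUnit.unit) Sum.inl (Sum.map id (fun _ => PUnit.unit))
          (Sum.map (fun _ => PUnit.unit) (fun _ => PUnit.unit))
          (fun _ _ => rfl) equivariant_inl
          (equivariant_id.sumMap (equivariant_fromEmpty _))
          (equivariant_toPUnit.sumMap equivariant_toPUnit) (fun _ => rfl) ?_
          (hsum PUnit PUnit Empty PUnit id (fun _ => PUnit.unit) equivariant_id
            (equivariant_fromEmpty _) hpt hempty)
        rintro (_ | e) (v | v) h
        · exact ⟨v, ⟨rfl, rfl⟩, fun _ h' => Sum.inl_injective h'.2⟩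
        · cases h
        · exact e.elim
        · exact e.elim
      · refine hstable S' (Empty ⊕ PUnit) (S ⊕ S') (PUnit ⊕ PUnit)
          (fun _ => Sum.inr PUnit.unit) Sum.inr (Sum.map (fun _ => PUnit.unit) id)
          (Sum.map (fun _ => PUnit.unit) (fun _ => PUnit.unit))
          (fun _ _ => rfl) equivariant_inr
          ((equivariant_fromEmpty _).sumMap equivariant_id)
          (equivariant_toPUnit.sumMap equivariant_toPUnit) (fun _ => rfl) ?_
          (hsum Empty PUnit PUnit PUnit (fun _ => PUnit.unit) id
            (equivariant_fromEmpty _) equivariant_id hempty hpt)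
        rintro (e | _) (v | v) h
        · exact e.elim
        · exact e.elim
        · cases h
        · exact ⟨v, ⟨rfl, rfl⟩, fun _ h' => Sum.inr_injective h'.2⟩
    · intro S S' U _ _ _ _ _ _ f g hf hg Pf Pg
      have foldU : P (U ⊕ U) U (Sum.elim id id) := by
        refine hstable (U ⊕ U) (PUnit ⊕ PUnit) U PUnit
          (Sum.map (fun _ => PUnit.unit) (fun _ => PUnit.unit)) (Sum.elim id id)
          (Sum.elim id id) (fun _ => PUnit.unit)
          (equivariant_toPUnit.sumMap equivariant_toPUnit)
          (equivariant_id.sumElim equivariant_id) (equivariant_id.sumElim equivariant_id)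
          equivariant_toPUnit (fun _ => rfl) ?_ hfold
        rintro (_ | _) v _
        · refine ⟨Sum.inl v, ⟨rfl, rfl⟩, ?_⟩
          rintro (w | w) ⟨h₁, h₂⟩
          · exact congrArg Sum.inl h₂
          · cases h₁
        · refine ⟨Sum.inr v, ⟨rfl, rfl⟩, ?_⟩
          rintro (w | w) ⟨h₁, h₂⟩
          · cases h₁
          · exact congrArg Sum.inr h₂
      have h := hcomp (S ⊕ S') (U ⊕ U) U (Sum.map f g) (Sum.elim id id) (hf.sumMap hg)
        (equivariant_id.sumElim equivariant_id) (hsum S U S' U f g hf hg Pf Pg) foldU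
      rwa [Sum.elim_comp_map] at h
end

section
/- Let P be a wide, pullback stable, finite coproduct complete subcategory of finite G-sets. A morphism f : S → T of finite G-sets lies in P if and only if for every s ∈ S the restriction of f to orbits, G·s → G·f(s) (with the G-actions inherited from S and T), lies in P. -/
/-!
Everything rests on one observation: every injective equivariant map `i : A → B` belongs to `P`
(`GoodClass.injective_mem`). Indeed the one-point `G`-set includes as a summand in the disjoint
union of two points, and the base change of this inclusion along the indicator function of the
(invariant) image of `i` is `i` itself. This covers isomorphisms, inclusions of orbits and maps out
of the empty set.

If `f` is in `P`, then so is its composite `G·s → S → T`, and the restriction `G·s → G·f(s)` is the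
base change of that composite along the inclusion `G·f(s) → T`. Conversely, composing the
restriction with `G·f(s) → T` shows that `f` restricted to each orbit is in `P`; these restrictions
are then glued along finite unions of orbits by copairing (`GoodClass.saturation_mem`). Overlapping
orbits need no separate treatment, since a union `U ∪ V` of invariant subsets embeds equivariantly
into `U ⊔ V`.
-/

open MulAction

/-- `P` is a wide, pullback stable, finite coproduct complete subcategory of the category
of finite `G`-sets: it contains all identities, is closed under composition, is stable
under base change, contains the summand inclusions, and contains copairings of its
members. -/
structure GoodClass (G : Type) [Group G] (P : MorCls G) : Prop where
  id_mem : ∀ (S : Type) [Finite S] [MulAction G S], P S S id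
  comp_mem : ∀ (S T U : Type) [Finite S] [Finite T] [Finite U]
    [MulAction G S] [MulAction G T] [MulAction G U] (f : S → T) (g : T → U),
    Equivariant G f → Equivariant G g → P S T f → P T U g → P S U (g ∘ f)
  stable : StableUnderBC G P
  inl_mem : ∀ (S S' : Type) [Finite S] [Finite S'] [MulAction G S] [MulAction G S'],
    P S (S ⊕ S') Sum.inl
  inr_mem : ∀ (S S' : Type) [Finite S] [Finite S'] [MulAction G S] [MulAction G S'],
    P S' (S ⊕ S') Sum.inr
  elim_mem : ∀ (S S' U : Type) [Finite S] [Finite S'] [Finite U]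
    [MulAction G S] [MulAction G S'] [MulAction G U] (f : S → U) (g : S' → U),
    Equivariant G f → Equivariant G g → P S U f → P S' U g → P (S ⊕ S') U (Sum.elim f g)

/-- The union of the orbits of the points of `F`, as an invariant subset of `S`. -/
def saturation (G : Type) [Group G] {S : Type} [MulAction G S] (F : Finset S) :
    SubMulAction G S where
  carrier := {x | ∃ s ∈ F, x ∈ orbit G s}
  smul_mem' g x := by
    rintro ⟨s, hs, hx⟩
    obtain ⟨a, rfl⟩ := hx
    exact ⟨s, hs, g * a, mul_smul g a s⟩

theorem GoodClass.injective_mem {G : Type} [Group G] {P : MorCls G} (hP : GoodClass G P)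
    {A B : Type} [Finite A] [Finite B] [MulAction G A] [MulAction G B]
    (i : A → B) (hi : Equivariant G i) (hinj : Function.Injective i) : P A B i := by
  classical
  have hrange : ∀ (g : G) (b : B), g • b ∈ Set.range i ↔ b ∈ Set.range i := by
    intro g b
    constructor
    · rintro ⟨a, ha⟩
      exact ⟨g⁻¹ • a, by rw [hi, ha, inv_smul_smul]⟩
    · rintro ⟨a, rfl⟩
      exact ⟨g • a, hi g a⟩
  refine hP.stable A PUnit B (PUnit ⊕ PUnit) (fun _ => PUnit.unit) i Sum.inl
    (fun b => if b ∈ Set.range i then Sum.inl PUnit.unit else Sum.inr PUnit.unit)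
    (fun _ _ => rfl) hi (fun _ _ => rfl) ?_ ?_ ?_ (hP.inl_mem _ _)
  · intro g b
    simp only [hrange]
    split_ifs <;> rfl
  · intro a
    simp
  · intro s v h
    by_cases hv : v ∈ Set.range i
    · obtain ⟨a, rfl⟩ := hv
      exact ⟨a, ⟨rfl, rfl⟩, fun a' h' => hinj h'.2⟩
    · simp [hv] at h

/-- Gluing: a map whose restriction to each single orbit is in `P` restricts to a member of `P` on
every finite union of orbits. -/
theorem GoodClass.saturation_mem {G : Type} [Group G] {P : MorCls G} (hP : GoodClass G P)
    {S T : Type} [Finite S] [Finite T] [MulAction G S] [MulAction G T]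
    (f : S → T) (hf : Equivariant G f)
    (h : ∀ s : S, P (orbit G s) T (fun x => f x)) (F : Finset S) :
    P (saturation G F) T (fun x => f x) := by
  classical
  induction F using Finset.induction_on with
  | empty =>
    have hempty : ∀ x : saturation G (∅ : Finset S), False := by
      rintro ⟨x, s, hs, -⟩
      simp at hs
    exact hP.injective_mem _ (fun g x => hf g x) (fun x => (hempty x).elim)
  | insert s F _ ih =>
    have hmem : ∀ x : saturation G (insert s F), (x : S) ∉ saturation G F →
        (x : S) ∈ orbit G s := by
      rintro ⟨x, t, ht, hx⟩ hn
      rcases Finset.mem_insert.1 ht with rfl | ht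
      · exact hx
      · exact (hn ⟨t, ht, hx⟩).elim
    -- The equivariant embedding of the union into the disjoint union; points lying in both
    -- pieces are sent to the left one.
    let j : saturation G (insert s F) → saturation G F ⊕ orbit G s := fun x =>
      if hx : (x : S) ∈ saturation G F then Sum.inl ⟨x, hx⟩ else Sum.inr ⟨x, hmem x hx⟩
    have hj : Equivariant G j := by
      intro g x
      by_cases hx : (x : S) ∈ saturation G F
      · have hgx : ((g • x : saturation G (insert s F)) : S) ∈ saturation G F :=
          (saturation G F).smul_mem g hx
        simp only [j, dif_pos hx, dif_pos hgx]
        rfl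
      · have hgx : ((g • x : saturation G (insert s F)) : S) ∉ saturation G F :=
          fun hc => hx (by simpa using (saturation G F).smul_mem g⁻¹ hc)
        simp only [j, dif_neg hx, dif_neg hgx]
        rfl
    have hval : ∀ x, Sum.elim (fun y : saturation G F => (y : S))
        (fun y : orbit G s => (y : S)) (j x) = x := by
      intro x
      by_cases hx : (x : S) ∈ saturation G F
      · simp only [j, dif_pos hx, Sum.elim_inl]
      · simp only [j, dif_neg hx, Sum.elim_inr]
    have hinj : Function.Injective j := fun x y hxy =>
      Subtype.ext (by rw [← hval x, ← hval y, hxy])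
    have e₁ : Equivariant G (fun x : saturation G F => f x) := fun g x => hf g x
    have e₂ : Equivariant G (fun x : orbit G s => f x) := fun g x => hf g x
    have e₃ : Equivariant G (Sum.elim (fun x : saturation G F => f x)
        (fun x : orbit G s => f x)) := by
      rintro g (x | x)
      · exact hf g x
      · exact hf g x
    have hcomp := hP.comp_mem _ _ _ j _ hj e₃ (hP.injective_mem j hj hinj)
      (hP.elim_mem _ _ _ _ _ e₁ e₂ ih (h s))
    convert hcomp using 1
    funext x
    conv_lhs => rw [← hval x]
    simp only [Function.comp_apply]
    cases j x <;> rfl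

/-- let `P` be a wide, pullback stable, finite coproduct complete
subcategory of finite `G`-sets.  A morphism `f : S → T` of finite `G`-sets lies in `P`
if and only if for every `s ∈ S` the restriction of `f` to orbits,
`G·s → G·f(s)` (with the `G`-actions inherited from `S` and `T`), lies in `P`. -/
theorem stmt10 (G : Type) [Group G] [Finite G] (P : MorCls G) (hP : GoodClass G P)
    (S T : Type) [Finite S] [Finite T] [MulAction G S] [MulAction G T]
    (f : S → T) (hf : Equivariant G f) :
    P S T f ↔
      ∀ (s : S) (r : orbit G s → orbit G (f s)),
        (∀ x : orbit G s, (r x : T) = f (x : S)) → P (orbit G s) (orbit G (f s)) r := by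
  classical
  have hrf : ∀ (s : S) (r : orbit G s → orbit G (f s)),
      (∀ x : orbit G s, (r x : T) = f (x : S)) → Equivariant G r := by
    intro s r hr g x
    apply Subtype.ext
    rw [hr, orbit.coe_smul, orbit.coe_smul, hr, hf]
  have eT : ∀ t : T, Equivariant G (fun y : orbit G t => (y : T)) := fun _ _ _ => rfl
  have eS : ∀ s : S, Equivariant G (fun y : orbit G s => (y : S)) := fun _ _ _ => rfl
  constructor
  · intro h s r hr
    have h₁ : P (orbit G s) T (f ∘ fun y : orbit G s => (y : S)) :=
      hP.comp_mem _ _ _ _ f (eS s) hf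
        (hP.injective_mem _ (eS s) Subtype.val_injective) h
    refine hP.stable _ _ _ _ id r _ (fun y : orbit G (f s) => (y : T)) (fun _ _ => rfl)
      (hrf s r hr) (fun g x => hf g x) (eT _) (fun a => (hr a).symm) ?_ h₁
    intro x y hxy
    exact ⟨x, ⟨rfl, Subtype.ext ((hr x).trans hxy)⟩, fun x' hx' => hx'.1⟩
  · intro h
    have horb : ∀ s : S, P (orbit G s) T (fun x => f x) := by
      intro s
      let r : orbit G s → orbit G (f s) := fun x => ⟨f x, by
        obtain ⟨x, g, rfl⟩ := x
        exact ⟨g, (hf g s).symm⟩⟩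
      exact hP.comp_mem _ _ _ r _ (hrf s r fun _ => rfl) (eT _) (h s r fun _ => rfl)
        (hP.injective_mem _ (eT _) Subtype.val_injective)
    cases nonempty_fintype S
    let k : S → saturation G (Finset.univ : Finset S) := fun s =>
      ⟨s, s, Finset.mem_univ s, mem_orbit_self s⟩
    have ek : Equivariant G k := fun _ _ => rfl
    exact hP.comp_mem _ _ _ k _ ek (fun g x => hf g x)
      (hP.injective_mem k ek fun x y hxy => congrArg Subtype.val hxy)
      (hP.saturation_mem f hf horb Finset.univ)
end

section
/- Let P be a wide, pullback stable, finite coproduct complete subcategory of finite G-sets, and let H ≤ G be a subgroup, with G/H the coset space equipped with the left translation G-action. Let p : X → G/H be a morphism of finite G-sets belonging to P, let q : Y → G/H be any morphism of finite G-sets, and let f : X → Y be a morphism with q ∘ f = p. Then f belongs to P. -/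
/-!
The map `f` factors as its graph `X → X ×_{G/H} Y`, `x ↦ (x, f x)`, followed by the
projection to `Y`. The projection is the base change of `p` along `q`, so it is in `P`
(`StableUnderBC`). The graph is injective and equivariant; since `G` is a group, the
complement of the image of an equivariant map is `G`-stable, so an equivariant injection is,
up to an isomorphism of the target, a summand inclusion and hence in `P`
(`GoodClass.mem_of_injective`). Isomorphisms are in `P` because they are base changes of
identities (`GoodClass.mem_of_bijective`).
-/

open MulAction

/-- An equivariant bijection is the base change of the identity of its target. -/
theorem GoodClass.mem_of_bijective {G : Type} [Group G] {P : MorCls G} (hP : GoodClass G P)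
    {S T : Type} [Finite S] [Finite T] [MulAction G S] [MulAction G T] (e : S → T)
    (he : Equivariant G e) (hb : Function.Bijective e) : P S T e := by
  refine hP.stable S T T T e e id id he he (fun _ _ => rfl) (fun _ _ => rfl)
    (fun _ => rfl) ?_ (hP.id_mem T)
  intro s v hsv
  obtain rfl : s = v := hsv
  obtain ⟨a, rfl⟩ := hb.2 s
  exact ⟨a, ⟨rfl, rfl⟩, fun b h => hb.1 h.1⟩

/-- The complement of the image of an equivariant map, as a `G`-set. -/
def complRange (G : Type) [Group G] {S T : Type} [MulAction G S] [MulAction G T] (i : S → T)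
    (hi : Equivariant G i) : SubMulAction G T where
  carrier := (Set.range i)ᶜ
  smul_mem' g t ht := by
    rintro ⟨s, hs⟩
    exact ht ⟨g⁻¹ • s, by rw [hi, hs, inv_smul_smul]⟩

/-- An equivariant injection exhibits its source as a summand of its target, the other
summand being the complement of the image. -/
theorem GoodClass.mem_of_injective {G : Type} [Group G] {P : MorCls G} (hP : GoodClass G P)
    {S T : Type} [Finite S] [Finite T] [MulAction G S] [MulAction G T] (i : S → T)
    (hi : Equivariant G i) (hinj : Function.Injective i) : P S T i := by
  let e : S ⊕ complRange G i hi → T := Sum.elim i Subtype.val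
  have he : Equivariant G e := by
    rintro g (s | c)
    · exact hi g s
    · rfl
  have hb : Function.Bijective e := by
    constructor
    · rintro (s | c) (s' | c') h
      · exact congrArg Sum.inl (hinj h)
      · exact absurd ⟨s, h⟩ c'.2
      · exact absurd ⟨s', h.symm⟩ c.2
      · exact congrArg Sum.inr (Subtype.ext h)
    · intro t
      by_cases ht : t ∈ Set.range i
      · obtain ⟨s, rfl⟩ := ht
        exact ⟨Sum.inl s, rfl⟩
      · exact ⟨Sum.inr ⟨t, ht⟩, rfl⟩
  exact hP.comp_mem _ _ _ Sum.inl e (fun _ _ => rfl) he (hP.inl_mem S (complRange G i hi))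
    (hP.mem_of_bijective e he hb)

/-- The fiber product of two equivariant maps, with the componentwise action. -/
def fiberProd (G : Type) [Group G] {X Y B : Type} [MulAction G X] [MulAction G Y]
    [MulAction G B] (p : X → B) (q : Y → B) (hp : Equivariant G p) (hq : Equivariant G q) :
    SubMulAction G (X × Y) where
  carrier := {z | p z.1 = q z.2}
  smul_mem' g z hz := by
    show p (g • z.1) = q (g • z.2)
    rw [hp, hq, show p z.1 = q z.2 from hz]

/-- let `P` be a wide, pullback stable, finite coproduct complete
subcategory of finite `G`-sets, and let `H ≤ G` be a subgroup, with `G/H` the coset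
space equipped with the left translation `G`-action.  Let `p : X → G/H` be a morphism of
finite `G`-sets belonging to `P`, let `q : Y → G/H` be any morphism of finite `G`-sets,
and let `f : X → Y` be a morphism with `q ∘ f = p`.  Then `f` belongs to `P`. -/
theorem stmt11 (G : Type) [Group G] [Finite G] (P : MorCls G) (hP : GoodClass G P)
    (H : Subgroup G)
    (X Y : Type) [Finite X] [Finite Y] [MulAction G X] [MulAction G Y]
    (p : X → G ⧸ H) (q : Y → G ⧸ H) (f : X → Y)
    (hp : Equivariant G p) (hq : Equivariant G q) (hf : Equivariant G f)
    (hpP : P X (G ⧸ H) p) (hcomm : ∀ x : X, q (f x) = p x) :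
    P X Y f := by
  let F := fiberProd G p q hp hq
  let graph : X → F := fun x => ⟨(x, f x), (hcomm x).symm⟩
  let proj : F → Y := fun z => z.1.2
  have hgraph : Equivariant G graph := fun g x =>
    Subtype.ext (Prod.ext rfl (hf g x))
  have hproj : Equivariant G proj := fun _ _ => rfl
  have hgraphP : P X F graph :=
    hP.mem_of_injective graph hgraph fun x y h => congrArg (fun z : F => z.1.1) h
  have hprojP : P F Y proj := by
    refine hP.stable F X Y (G ⧸ H) (fun z => z.1.1) proj p q (fun _ _ => rfl) hproj hp hq
      (fun z => z.2) ?_ hpP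
    intro x y hxy
    exact ⟨⟨(x, y), hxy⟩, ⟨rfl, rfl⟩, fun z hz => Subtype.ext (Prod.ext hz.1 hz.2)⟩
  exact hP.comp_mem _ _ _ graph proj hgraph hproj hgraphP hprojP
end

section
/- Let P be a wide, pullback stable, finite coproduct complete subcategory of finite G-sets. A morphism f : S → T of finite G-sets lies in P if and only if for every s ∈ S the canonical projection G/Stab(s) → G/Stab(f(s)) of coset spaces (with the left translation G-actions; well defined since Stab(s) ≤ Stab(f(s))) lies in P. -/
/-!
Two consequences of the closure properties drive the proof. Every equivariant injection
`i : A → B` lies in `P`, because it is the base change of the summand inclusion `1 → 1 ⊔ 1` along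
the characteristic map `B → 1 ⊔ 1` of its image (`GoodClass.of_injective`); in particular all
isomorphisms and all maps out of the empty `G`-set lie in `P`. And `P` can be cancelled along
injections: if `i` is injective and `i ∘ p ∈ P`, then `p ∈ P`, because `p` is the base change of
`i ∘ p` along `i` (`GoodClass.of_comp_injective`).

For `s : S` the orbit maps `h : G/Stab(s) → S` and `k : G/Stab(f s) → T` are equivariant
injections with `f ∘ h = k ∘ π`. Hence `π ∈ P` if and only if `f ∘ h ∈ P`, which gives the forward
direction at once. Conversely, `S` is a finite disjoint union of orbits, so that, up to an
isomorphism, `f` is an iterated copairing of maps `f ∘ h` (`GoodClass.exists_cover`).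
-/

open MulAction

section Helpers

variable {G : Type} [Group G] {P : MorCls G}

/-- Every equivariant injection lies in `P`: it is a base change of `1 → 1 ⊔ 1`. -/
theorem GoodClass.of_injective (hP : GoodClass G P) {A B : Type} [Finite A] [Finite B]
    [MulAction G A] [MulAction G B] (i : A → B) (hi : Equivariant G i)
    (inj : Function.Injective i) : P A B i := by
  classical
  have hrange : ∀ (g : G) (b : B), g • b ∈ Set.range i ↔ b ∈ Set.range i := by
    intro g b
    constructor
    · rintro ⟨a, ha⟩
      exact ⟨g⁻¹ • a, by rw [hi, ha, inv_smul_smul]⟩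
    · rintro ⟨a, rfl⟩
      exact ⟨g • a, hi g a⟩
  refine hP.stable A Unit B (Unit ⊕ Unit) (fun _ => ()) i Sum.inl
    (fun b => if b ∈ Set.range i then Sum.inl () else Sum.inr ())
    (fun _ _ => rfl) hi (fun _ _ => rfl) ?_ ?_ ?_ (hP.inl_mem Unit Unit)
  · intro g b
    simp only [hrange]
    split_ifs <;> rfl
  · intro a
    simp
  · intro u b hb
    by_cases h : b ∈ Set.range i
    · obtain ⟨a, rfl⟩ := h
      exact ⟨a, ⟨rfl, rfl⟩, fun a' ha' => inj ha'.2⟩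
    · simp [h] at hb

/-- If `i` is injective, then `p` is the base change of `i ∘ p` along `i`. -/
theorem GoodClass.of_comp_injective (hP : GoodClass G P) {A B C : Type}
    [Finite A] [Finite B] [Finite C] [MulAction G A] [MulAction G B] [MulAction G C]
    (p : A → B) (i : B → C) (hp : Equivariant G p) (hi : Equivariant G i)
    (inj : Function.Injective i) (h : P A C (i ∘ p)) : P A B p := by
  refine hP.stable A A B C id p (i ∘ p) i (fun _ _ => rfl) hp ?_ hi (fun _ => rfl) ?_ h
  · intro g a
    simp only [Function.comp_apply, hp g a, hi g]
  · intro a b hab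
    exact ⟨a, ⟨rfl, inj hab⟩, fun a' ha' => ha'.1⟩

theorem equivariant_ofQuotientStabilizer {S : Type} [MulAction G S] (s : S) :
    Equivariant G (ofQuotientStabilizer G s) :=
  fun g x => ofQuotientStabilizer_smul G s g x

/-- If the restriction of `f` to each orbit lies in `P`, then every finite set of points of `S`
is contained in an invariant subset (encoded by an equivariant injection `q : X → S`) on which the
restriction of `f` lies in `P`. The subset is built by adjoining one orbit at a time. -/
theorem GoodClass.exists_cover [Finite G] (hP : GoodClass G P) {S T : Type} [Finite S] [Finite T]
    [MulAction G S] [MulAction G T] (f : S → T) (hf : Equivariant G f)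
    (h : ∀ s : S, P (G ⧸ stabilizer G s) T (f ∘ ofQuotientStabilizer G s)) (F : Finset S) :
    ∃ (X : Type) (_ : Finite X) (_ : MulAction G X) (q : X → S),
      Equivariant G q ∧ Function.Injective q ∧ P X T (f ∘ q) ∧ ∀ s ∈ F, s ∈ Set.range q := by
  classical
  induction F using Finset.induction_on with
  | empty =>
    let _ : MulAction G Empty :=
      { smul := fun _ x => x, one_smul := fun _ => rfl, mul_smul := fun _ _ _ => rfl }
    exact ⟨Empty, inferInstance, inferInstance, Empty.elim, fun _ x => x.elim,
      fun x => x.elim, hP.of_injective _ (fun _ x => x.elim) (fun x => x.elim), by simp⟩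
  | insert s F _ ih =>
    obtain ⟨X, hX, aX, q, hq, inj, hPq, hF⟩ := ih
    by_cases hs : s ∈ Set.range q
    · refine ⟨X, hX, aX, q, hq, inj, hPq, ?_⟩
      intro t ht
      rcases Finset.mem_insert.1 ht with rfl | ht
      · exact hs
      · exact hF t ht
    · have hk := equivariant_ofQuotientStabilizer (G := G) s
      refine ⟨X ⊕ (G ⧸ stabilizer G s), inferInstance, inferInstance,
        Sum.elim q (ofQuotientStabilizer G s), ?_, ?_, ?_, ?_⟩
      · rintro g (x | y)
        · exact hq g x
        · exact hk g y
      · refine inj.sumElim (injective_ofQuotientStabilizer G s) ?_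
        -- The image of `q` is invariant, so it would contain `s` if it met the orbit of `s`.
        intro x y hxy
        induction y using QuotientGroup.induction_on with
        | H g =>
          rw [ofQuotientStabilizer_mk] at hxy
          exact hs ⟨g⁻¹ • x, by rw [hq, hxy, inv_smul_smul]⟩
      · rw [Sum.comp_elim]
        refine hP.elim_mem _ _ _ _ _ ?_ ?_ hPq (h s)
        · intro g x
          simp only [Function.comp_apply, hq g x, hf g]
        · intro g y
          simp only [Function.comp_apply, hk g y, hf g]
      · intro t ht
        rcases Finset.mem_insert.1 ht with rfl | ht
        · exact ⟨Sum.inr ((1 : G) : G ⧸ stabilizer G t), by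
            rw [Sum.elim_inr, ofQuotientStabilizer_mk, one_smul]⟩
        · obtain ⟨x, rfl⟩ := hF t ht
          exact ⟨Sum.inl x, rfl⟩

end Helpers

/-- let `P` be a wide, pullback stable, finite coproduct complete
subcategory of finite `G`-sets.  A morphism `f : S → T` of finite `G`-sets lies in `P`
if and only if for every `s ∈ S` the canonical projection
`G/Stab(s) → G/Stab(f(s))` of coset spaces (with the left translation `G`-actions; well
defined since `Stab(s) ≤ Stab(f(s))`) lies in `P`. -/
theorem stmt17 (G : Type) [Group G] [Finite G] (P : MorCls G) (hP : GoodClass G P)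
    (S T : Type) [Finite S] [Finite T] [MulAction G S] [MulAction G T]
    (f : S → T) (hf : Equivariant G f) :
    P S T f ↔
      ∀ (s : S) (π : G ⧸ stabilizer G s → G ⧸ stabilizer G (f s)),
        (∀ g : G, π (g : G ⧸ stabilizer G s) = (g : G ⧸ stabilizer G (f s))) →
        P (G ⧸ stabilizer G s) (G ⧸ stabilizer G (f s)) π := by
  have hπ : ∀ (s : S) (π : G ⧸ stabilizer G s → G ⧸ stabilizer G (f s)),
      (∀ g : G, π (g : G ⧸ stabilizer G s) = (g : G ⧸ stabilizer G (f s))) →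
      Equivariant G π ∧
        ofQuotientStabilizer G (f s) ∘ π = f ∘ ofQuotientStabilizer G s := by
    intro s π h
    constructor
    · intro g x
      induction x using QuotientGroup.induction_on with
      | H a =>
        rw [h a]
        exact h (g * a)
    · funext x
      induction x using QuotientGroup.induction_on with
      | H a =>
        simp only [Function.comp_apply, h a, ofQuotientStabilizer_mk, hf a]
  constructor
  · intro hPf s π h
    obtain ⟨eq, comm⟩ := hπ s π h
    have hk := equivariant_ofQuotientStabilizer (G := G) s
    refine hP.of_comp_injective π (ofQuotientStabilizer G (f s)) eq
      (equivariant_ofQuotientStabilizer _) (injective_ofQuotientStabilizer G _) ?_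
    rw [comm]
    exact hP.comp_mem _ _ _ _ _ hk hf
      (hP.of_injective _ hk (injective_ofQuotientStabilizer G s)) hPf
  · intro h
    have orb : ∀ s : S, P (G ⧸ stabilizer G s) T (f ∘ ofQuotientStabilizer G s) := by
      intro s
      have le : stabilizer G s ≤ stabilizer G (f s) := by
        intro g hg
        rw [mem_stabilizer_iff] at hg ⊢
        rw [← hf, hg]
      have spec : ∀ g : G, Subgroup.quotientMapOfLE le (g : G ⧸ stabilizer G s)
          = (g : G ⧸ stabilizer G (f s)) := fun _ => rfl
      obtain ⟨eq, comm⟩ := hπ s _ spec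
      have hk := equivariant_ofQuotientStabilizer (G := G) (f s)
      rw [← comm]
      exact hP.comp_mem _ _ _ _ _ eq hk (h s _ spec)
        (hP.of_injective _ hk (injective_ofQuotientStabilizer G _))
    have := Fintype.ofFinite S
    obtain ⟨X, hX, aX, q, hq, inj, hPq, hF⟩ := hP.exists_cover f hf orb Finset.univ
    -- Now `q` is an isomorphism, and `f = (f ∘ q) ∘ q⁻¹`.
    let e := Equiv.ofBijective q ⟨inj, fun s => hF s (Finset.mem_univ s)⟩
    have he : ∀ s, q (e.symm s) = s := e.apply_symm_apply
    have hsymm : Equivariant G e.symm := by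
      intro g s
      apply inj
      rw [hq, he, he]
    have hfe : f = (f ∘ q) ∘ e.symm := by
      funext s
      simp only [Function.comp_apply, he]
    rw [hfe]
    refine hP.comp_mem _ _ _ _ _ hsymm ?_ (hP.of_injective _ hsymm e.symm.injective) hPq
    intro g x
    simp only [Function.comp_apply, hq g x, hf g]
end
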